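/- Let (S, step, final) be a transition system over result type R. Then (classically, using dependent choice) every state exhibits at least one behavior: for every state s, either s terminates with some result r, or s diverges, or s goes wrong. -/

import Mathlib

def Stuck {S : Type*} (step : S → S → Prop) (s : S) : Prop :=
  ¬ ∃ s', step s s'

def Terminates {S R : Type*} (step : S → S → Prop) (final : S → R → Prop)
    (s : S) (r : R) : Prop :=
  ∃ s', Relation.ReflTransGen step s s' ∧ final s' r

def Diverges {S : Type*} (step : S → S → Prop) (s : S) : Prop :=
  ∃ f : ℕ → S, f 0 = s ∧ ∀ n, step (f n) (f (n + 1))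

def GoesWrong {S R : Type*} (step : S → S → Prop) (final : S → R → Prop)
    (s : S) : Prop :=
  ∃ s', Relation.ReflTransGen step s s' ∧ Stuck step s' ∧ ¬ ∃ r, final s' r

/-!
A state diverges exactly when it is not accessible for the reversed step relation. From an
accessible state, well-founded induction reaches a stuck state: if it carries a result the run
terminates, and otherwise it goes wrong.
-/

section

variable {S R : Type*} {step : S → S → Prop} {final : S → R → Prop} {s s' : S}

theorem diverges_iff_not_acc : Diverges step s ↔ ¬ Acc (flip step) s :=
  (not_acc_iff_exists_descending_chain (r := flip step)).symm

theorem exists_reflTransGen_stuck_of_acc (hs : Acc (flip step) s) :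
    ∃ s', Relation.ReflTransGen step s s' ∧ Stuck step s' := by
  induction hs with
  | intro s _ ih =>
    by_cases h_stuck : Stuck step s
    · exact ⟨s, .refl, h_stuck⟩
    · obtain ⟨t, hst⟩ := not_not.mp h_stuck
      obtain ⟨s', hts', hs'⟩ := ih t hst
      exact ⟨s', .head hst hts', hs'⟩

theorem exists_terminates_or_goesWrong_of_reflTransGen_stuck
    (hss' : Relation.ReflTransGen step s s') (hs' : Stuck step s') :
    (∃ r, Terminates step final s r) ∨ GoesWrong step final s := by
  by_cases h_result : ∃ r, final s' r
  · exact .inl (h_result.imp fun _ hr => ⟨s', hss', hr⟩)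
  · exact .inr ⟨s', hss', hs', h_result⟩

end

/-- every state exhibits at least one behavior. -/
theorem behavior_exists {S R : Type*}
    (step : S → S → Prop) (final : S → R → Prop) (s : S) :
    (∃ r, Terminates step final s r) ∨ Diverges step s ∨ GoesWrong step final s := by
  by_cases hs : Acc (flip step) s
  · obtain ⟨s', hss', hs'⟩ := exists_reflTransGen_stuck_of_acc hs
    exact (exists_terminates_or_goesWrong_of_reflTransGen_stuck hss' hs').imp_right .inr
  · exact .inr (.inl (diverges_iff_not_acc.mpr hs))
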